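/- Verification of condition (G2) in the bounded normal shift model: let A > 0, let μ_1,…,μ_n ∈ ℝ with |μ_j| ≤ A for all j, let f_j be the N(μ_j, 1) density, and set p_j(y) = f_j(y)/Σ_{k=1}^n f_k(y). If Y ∼ N(μ_1, 1), then E Σ_{j=1}^n p_j(Y)² ≤ e^{12A²}/n. -/

import Mathlib

/-!
Write `f_j` for the `N(μ_j, 1)` density. Since `x ↦ x⁻²` is convex on `(0, ∞)`, Jensen's inequality
gives `(∑ k, f_k)⁻² ≤ n⁻³ ∑ k, f_k⁻²`, hence pointwise
`∑ j, p_j² ≤ n⁻³ ∑ j, ∑ k, (f_j / f_k)²`. Each `(f_j / f_k)²` is the exponential of an affine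
function of `y`, so its expectation under `N(m, 1)`, `m = μ_1`, is given by the Gaussian moment
generating function: it is `exp ((a - b) * (2 * m + a - 3 * b))` with `a = μ_j`, `b = μ_k`. As
`|a - b| ≤ 2A` and `|2m + a - 3b| ≤ 6A`, each of the `n²` expectations is at most `exp (12 A²)`.
-/

open MeasureTheory ENNReal

noncomputable section

/-- the `N(μ,1)` density with respect to Lebesgue measure -/
def gaussDen (μ : ℝ) (y : ℝ) : ℝ :=
  (Real.sqrt (2 * Real.pi))⁻¹ * Real.exp (-(y - μ) ^ 2 / 2)

theorem gaussDen_pos (μ y : ℝ) : 0 < gaussDen μ y := by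
  unfold gaussDen
  positivity

theorem withDensity_gaussDen (m : ℝ) :
    ((volume : Measure ℝ).withDensity fun y => ENNReal.ofReal (gaussDen m y))
      = ProbabilityTheory.gaussianReal m 1 := by
  rw [ProbabilityTheory.gaussianReal_of_var_ne_zero _ one_ne_zero]
  congr 1
  funext y
  simp [ProbabilityTheory.gaussianPDF, ProbabilityTheory.gaussianPDFReal, gaussDen]

theorem gaussDen_div_sq (a b y : ℝ) :
    (gaussDen a y / gaussDen b y) ^ 2
      = Real.exp (b ^ 2 - a ^ 2) * Real.exp (2 * (a - b) * y) := by
  have hc : (Real.sqrt (2 * Real.pi))⁻¹ ≠ 0 := by positivity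
  unfold gaussDen
  rw [mul_div_mul_left _ _ hc, ← Real.exp_sub, ← Real.exp_nat_mul, ← Real.exp_add]
  congr 1
  push_cast
  ring

theorem integrable_gaussDen_div_sq (a b m : ℝ) :
    Integrable (fun y => (gaussDen a y / gaussDen b y) ^ 2)
      (ProbabilityTheory.gaussianReal m 1) := by
  simp_rw [gaussDen_div_sq]
  exact (ProbabilityTheory.integrable_exp_mul_gaussianReal _).const_mul _

theorem integral_gaussDen_div_sq (a b m : ℝ) :
    ∫ y, (gaussDen a y / gaussDen b y) ^ 2 ∂(ProbabilityTheory.gaussianReal m 1)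
      = Real.exp ((a - b) * (2 * m + a - 3 * b)) := by
  simp_rw [gaussDen_div_sq]
  have h := congrFun (ProbabilityTheory.mgf_id_gaussianReal (μ := m) (v := 1)) (2 * (a - b))
  simp only [ProbabilityTheory.mgf, id] at h
  rw [integral_const_mul, h, ← Real.exp_add]
  congr 1
  push_cast
  ring

theorem exponent_le {A a b m : ℝ} (ha : |a| ≤ A) (hb : |b| ≤ A) (hm : |m| ≤ A) :
    (a - b) * (2 * m + a - 3 * b) ≤ 12 * A ^ 2 := by
  rw [abs_le] at ha hb hm
  have h1 : |a - b| ≤ 2 * A := abs_le.2 ⟨by linarith, by linarith⟩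
  have h2 : |2 * m + a - 3 * b| ≤ 6 * A := abs_le.2 ⟨by linarith, by linarith⟩
  calc (a - b) * (2 * m + a - 3 * b) ≤ |a - b| * |2 * m + a - 3 * b| := by
        rw [← abs_mul]
        exact le_abs_self _
    _ ≤ (2 * A) * (6 * A) := mul_le_mul h1 h2 (abs_nonneg _) (by linarith)
    _ = 12 * A ^ 2 := by ring

/-- Jensen's inequality for `x ↦ x⁻²`, applied to the denominator of each normalized weight. -/
theorem sum_div_sum_sq_le {n : ℕ} (hn : 0 < n) (f : Fin n → ℝ) (hf : ∀ j, 0 < f j) :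
    ∑ j, (f j / ∑ k, f k) ^ 2 ≤ ((n : ℝ) ^ 3)⁻¹ * ∑ j, ∑ k, (f j / f k) ^ 2 := by
  have hn' : (0 : ℝ) < n := by exact_mod_cast hn
  have hJ := Real.zpow_arith_mean_le_arith_mean_zpow Finset.univ (fun _ : Fin n => (n : ℝ)⁻¹) f
    (fun _ _ => by positivity) (by simp [hn'.ne']) (fun i _ => hf i) (-2)
  rw [← Finset.mul_sum, ← Finset.mul_sum] at hJ
  have hz : ∀ x : ℝ, x ^ (-2 : ℤ) = (x ^ 2)⁻¹ := fun x => by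
    rw [zpow_neg]; norm_cast
  simp only [hz] at hJ
  have hJ' : ((∑ k, f k) ^ 2)⁻¹ ≤ ((n : ℝ) ^ 3)⁻¹ * ∑ k, (f k ^ 2)⁻¹ := by
    calc ((∑ k, f k) ^ 2)⁻¹
        = ((n : ℝ) ^ 2)⁻¹ * (((n : ℝ)⁻¹ * ∑ k, f k) ^ 2)⁻¹ := by
          rw [mul_pow, mul_inv, inv_pow, inv_inv, ← mul_assoc, inv_mul_cancel₀ (by positivity),
            one_mul]
      _ ≤ ((n : ℝ) ^ 2)⁻¹ * ((n : ℝ)⁻¹ * ∑ k, (f k ^ 2)⁻¹) := by gcongr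
      _ = ((n : ℝ) ^ 3)⁻¹ * ∑ k, (f k ^ 2)⁻¹ := by
          rw [← mul_assoc, ← mul_inv, ← pow_succ]
  rw [Finset.mul_sum]
  refine Finset.sum_le_sum fun j _ => ?_
  calc (f j / ∑ k, f k) ^ 2 = f j ^ 2 * ((∑ k, f k) ^ 2)⁻¹ := by rw [div_pow, div_eq_mul_inv]
    _ ≤ f j ^ 2 * (((n : ℝ) ^ 3)⁻¹ * ∑ k, (f k ^ 2)⁻¹) := by gcongr
    _ = ((n : ℝ) ^ 3)⁻¹ * ∑ k, (f j / f k) ^ 2 := by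
        simp_rw [div_pow, div_eq_mul_inv, ← Finset.mul_sum]
        ring

/-- verification of (G2) in the bounded normal shift model.  If
`|μ_j| ≤ A` for all `j`, `p_j(y) = f_j(y)/Σ_k f_k(y)` with `f_j` the `N(μ_j,1)` density,
and `Y ∼ N(μ_1,1)`, then `E Σ_j p_j(Y)² ≤ e^{12A²}/n`. -/
theorem stmt_18 (A : ℝ) (hA : 0 < A) (n : ℕ) (hn : 0 < n) (μs : Fin n → ℝ)
    (hμ : ∀ j, |μs j| ≤ A) :
    ∫ y, ∑ j, (gaussDen (μs j) y / ∑ k, gaussDen (μs k) y) ^ 2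
        ∂((volume : Measure ℝ).withDensity fun y =>
          ENNReal.ofReal (gaussDen (μs ⟨0, hn⟩) y))
      ≤ Real.exp (12 * A ^ 2) / n := by
  have hn' : (0 : ℝ) < n := by exact_mod_cast hn
  rw [withDensity_gaussDen]
  have hint : ∀ j k, Integrable (fun y => (gaussDen (μs j) y / gaussDen (μs k) y) ^ 2)
      (ProbabilityTheory.gaussianReal (μs ⟨0, hn⟩) 1) :=
    fun j k => integrable_gaussDen_div_sq _ _ _
  have hint' : ∀ j, Integrable (fun y => ∑ k, (gaussDen (μs j) y / gaussDen (μs k) y) ^ 2)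
      (ProbabilityTheory.gaussianReal (μs ⟨0, hn⟩) 1) :=
    fun j => integrable_finsetSum _ fun k _ => hint j k
  calc _ ≤ ∫ y, ((n : ℝ) ^ 3)⁻¹ * ∑ j, ∑ k, (gaussDen (μs j) y / gaussDen (μs k) y) ^ 2
          ∂(ProbabilityTheory.gaussianReal (μs ⟨0, hn⟩) 1) := by
        refine integral_mono_of_nonneg (.of_forall fun y => ?_)
          ((integrable_finsetSum _ fun j _ => hint' j).const_mul _) (.of_forall fun y => ?_)
        · exact Finset.sum_nonneg fun j _ => sq_nonneg _
        · exact sum_div_sum_sq_le hn (fun j => gaussDen (μs j) y) fun j => gaussDen_pos _ _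
    _ = ((n : ℝ) ^ 3)⁻¹ * ∑ j, ∑ k,
          Real.exp ((μs j - μs k) * (2 * μs ⟨0, hn⟩ + μs j - 3 * μs k)) := by
        rw [integral_const_mul, integral_finsetSum _ fun j _ => hint' j]
        congr 1
        refine Finset.sum_congr rfl fun j _ => ?_
        rw [integral_finsetSum _ fun k _ => hint j k]
        exact Finset.sum_congr rfl fun k _ => integral_gaussDen_div_sq _ _ _
    _ ≤ ((n : ℝ) ^ 3)⁻¹ * ∑ _j : Fin n, ∑ _k : Fin n, Real.exp (12 * A ^ 2) := by
        refine mul_le_mul_of_nonneg_left (Finset.sum_le_sum fun j _ =>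
          Finset.sum_le_sum fun k _ => Real.exp_le_exp.2 ?_) (by positivity)
        exact exponent_le (hμ j) (hμ k) (hμ _)
    _ = Real.exp (12 * A ^ 2) / n := by
        simp only [Finset.sum_const, Finset.card_univ, Fintype.card_fin, nsmul_eq_mul]
        field_simp
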